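/- Let G be a finite connected simple graph and D a valid orientation of G with γ_t(D) = |V(G)| − 1. Suppose s ∈ V(G) has out-degree 0 and in-degree at least 2 in D. Then the subgraph of G induced on V(G) ∖ {s} is 2-regular, i.e., G − s is a disjoint union of cycles. -/

import Mathlib

/-- A set `S` is a total dominating set of the digraph `D` (given as its arc
relation) if every vertex has an in-neighbor belonging to `S`. -/
def TotalDomSet {V : Type} (D : V → V → Prop) (S : Set V) : Prop :=
  ∀ v : V, ∃ u ∈ S, D u v

/-- The total domination number of a digraph: the least cardinality of a total
dominating set. -/
noncomputable def totalDomNum {V : Type} (D : V → V → Prop) : ℕ :=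
  sInf {n | ∃ S : Set V, TotalDomSet D S ∧ S.ncard = n}

/-- `D` is an orientation of the simple graph `G`: every arc of `D` lies on an
edge of `G`, and every edge of `G` carries exactly one of the two possible arcs. -/
def IsOrientation {V : Type} (G : SimpleGraph V) (D : V → V → Prop) : Prop :=
  (∀ u v : V, D u v → G.Adj u v) ∧ ∀ u v : V, G.Adj u v → (D u v ↔ ¬ D v u)

/-- An orientation (digraph) is valid if every vertex has at least one in-neighbor. -/
def IsValidOrientation {V : Type} (D : V → V → Prop) : Prop :=
  ∀ v : V, ∃ u : V, D u v

/-- The upper orientable total domination number of `G`. -/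
noncomputable def DOMt {V : Type} [Fintype V] (G : SimpleGraph V) : ℕ :=
  sSup {n | ∃ D : V → V → Prop, IsOrientation G D ∧ IsValidOrientation D ∧ totalDomNum D = n}

/-- The lower orientable total domination number of `G`. -/
noncomputable def domt {V : Type} [Fintype V] (G : SimpleGraph V) : ℕ :=
  sInf {n | ∃ D : V → V → Prop, IsOrientation G D ∧ IsValidOrientation D ∧ totalDomNum D = n}

/-!
Deleting the sink `s` and another vertex `u` leaves too few vertices to dominate, so some vertex
has all its in-neighbors in `{s, u}`, hence `u` as its only in-neighbor. Choosing such a vertex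
`f u` for each `u ≠ s` gives an injective map, which avoids `s` because `s` has in-degree at least
two. By finiteness `f` permutes the vertices other than `s`, and it accounts for every arc among
them; the absence of opposite arcs excludes 2-cycles of `f`, so each `v ≠ s` has exactly the
neighbors `f⁻¹ v` and `f v` apart from `s`.
-/

/-- `v` is a private out-neighbor of `u` in the digraph `D`, in the sense of domination theory:
`u` is an in-neighbor of `v`, and the only one. -/
def IsPrivateOutNeighbor {V : Type*} (D : V → V → Prop) (u v : V) : Prop :=
  ∀ w : V, D w v ↔ w = u

section Digraph

variable {V : Type*} {D : V → V → Prop} {A : Set V} {f : V → V} {u v : V}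

theorem IsPrivateOutNeighbor.ncard_inNeighbors (h : IsPrivateOutNeighbor D u v) :
    {w : V | D w v}.ncard = 1 :=
  Set.ncard_eq_one.2 ⟨u, Set.ext h⟩

theorem injOn_of_isPrivateOutNeighbor (hf : ∀ u ∈ A, IsPrivateOutNeighbor D u (f u)) :
    Set.InjOn f A := by
  intro u hu w hw huw
  have harc : D u (f u) := (hf u hu u).2 rfl
  exact (hf w hw u).1 (huw ▸ harc)

theorem arc_iff_of_isPrivateOutNeighbor (hsurj : Set.SurjOn f A A)
    (hf : ∀ u ∈ A, IsPrivateOutNeighbor D u (f u)) (hu : u ∈ A) (hv : v ∈ A) :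
    D u v ↔ f u = v := by
  obtain ⟨x, hx, rfl⟩ := hsurj hv
  exact (hf x hx u).trans ((injOn_of_isPrivateOutNeighbor hf).eq_iff hu hx).symm

end Digraph

section Domination

variable {V : Type} {D : V → V → Prop} {s u : V}

theorem totalDomNum_le_ncard {S : Set V} (hS : TotalDomSet D S) : totalDomNum D ≤ S.ncard :=
  Nat.sInf_le ⟨S, hS, rfl⟩

theorem exists_forall_inNeighbor_mem_of_ncard_compl_lt {T : Set V}
    (hT : Tᶜ.ncard < totalDomNum D) : ∃ v : V, ∀ w : V, D w v → w ∈ T := by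
  by_contra! hescape
  have hdom : TotalDomSet D Tᶜ := fun v =>
    let ⟨w, hwv, hwT⟩ := hescape v
    ⟨w, hwT, hwv⟩
  exact hT.not_ge (totalDomNum_le_ncard hdom)

theorem exists_isPrivateOutNeighbor_of_totalDomNum_eq [Fintype V] (hvalid : IsValidOrientation D)
    (hγ : totalDomNum D = Fintype.card V - 1) (hout : ∀ w : V, ¬ D s w) (hu : u ≠ s) :
    ∃ v : V, IsPrivateOutNeighbor D u v := by
  have hcard : ({s, u} : Set V)ᶜ.ncard < totalDomNum D := by
    have hsum := Set.ncard_add_ncard_compl ({s, u} : Set V)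
    rw [Set.ncard_pair hu.symm, Nat.card_eq_fintype_card] at hsum
    lia
  obtain ⟨v, hv⟩ := exists_forall_inNeighbor_mem_of_ncard_compl_lt hcard
  have honly : ∀ w, D w v → w = u := fun w hw =>
    (hv w hw).resolve_left fun hws => hout v (hws ▸ hw)
  obtain ⟨w, hw⟩ := hvalid v
  have harc : D u v := honly w hw ▸ hw
  exact ⟨v, fun w => ⟨honly w, fun hwu => hwu ▸ harc⟩⟩

end Domination

section Orientation

variable {V : Type} {G : SimpleGraph V} {D : V → V → Prop} {A : Set V} {f : V → V} {u v : V}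

theorem IsOrientation.not_arc_symm (hor : IsOrientation G D) (huv : D u v) : ¬ D v u :=
  (hor.2 u v (hor.1 u v huv)).1 huv

theorem IsOrientation.adj_iff (hor : IsOrientation G D) : G.Adj u v ↔ D u v ∨ D v u := by
  refine ⟨fun hadj => ?_, fun h => h.elim (hor.1 u v) fun hvu => (hor.1 v u hvu).symm⟩
  exact or_iff_not_imp_right.2 (hor.2 u v hadj).2

theorem IsOrientation.neighborSet_inter_eq_pair (hor : IsOrientation G D)
    (hf : Set.BijOn f A A) (harc : ∀ u ∈ A, ∀ v ∈ A, (D u v ↔ f u = v)) (hu : u ∈ A) :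
    G.neighborSet (f u) ∩ A = {u, f (f u)} := by
  have hfu : f u ∈ A := hf.mapsTo hu
  ext w
  constructor
  · rintro ⟨hadj, hw⟩
    rcases hor.adj_iff.1 hadj with hout | hin
    · exact Or.inr ((harc _ hfu w hw).1 hout).symm
    · exact Or.inl (hf.injOn hw hu ((harc w hw _ hfu).1 hin))
  · rintro (rfl | rfl)
    · exact ⟨hor.adj_iff.2 (Or.inr ((harc w hu _ hfu).2 rfl)), hu⟩
    · have hffu : f (f u) ∈ A := hf.mapsTo hfu
      exact ⟨hor.adj_iff.2 (Or.inl ((harc _ hfu _ hffu).2 rfl)), hffu⟩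

theorem IsOrientation.ncard_neighborSet_inter_eq_two (hor : IsOrientation G D)
    (hf : Set.BijOn f A A) (harc : ∀ u ∈ A, ∀ v ∈ A, (D u v ↔ f u = v)) (hv : v ∈ A) :
    (G.neighborSet v ∩ A).ncard = 2 := by
  obtain ⟨u, hu, rfl⟩ := hf.surjOn hv
  have hne : u ≠ f (f u) := fun hcycle =>
    hor.not_arc_symm ((harc u hu _ hv).2 rfl) ((harc _ hv u hu).2 hcycle.symm)
  rw [hor.neighborSet_inter_eq_pair hf harc hu, Set.ncard_pair hne]

end Orientation

theorem stmt_14_general {V : Type} [Fintype V] (G : SimpleGraph V)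
    (D : V → V → Prop) (hor : IsOrientation G D) (hvalid : IsValidOrientation D)
    (hγ : totalDomNum D = Fintype.card V - 1)
    (s : V) (hout : ∀ w : V, ¬ D s w) (hin : 2 ≤ {u : V | D u s}.ncard) :
    ∀ v : V, v ≠ s → (G.neighborSet v \ {s}).ncard = 2 := by
  choose! f hf using fun u (hu : u ∈ ({s}ᶜ : Set V)) =>
    exists_isPrivateOutNeighbor_of_totalDomNum_eq hvalid hγ hout hu
  have hmaps : Set.MapsTo f {s}ᶜ {s}ᶜ := fun u hu hfu => by
    have hone := (hf u hu).ncard_inNeighbors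
    rw [hfu] at hone
    lia
  have hbij : Set.BijOn f {s}ᶜ {s}ᶜ :=
    ((Set.toFinite _).injOn_iff_bijOn_of_mapsTo hmaps).1 (injOn_of_isPrivateOutNeighbor hf)
  intro v hv
  rw [Set.sdiff_eq]
  exact hor.ncard_neighborSet_inter_eq_two hbij
    (fun _ hu _ hw => arc_iff_of_isPrivateOutNeighbor hbij.surjOn hf hu hw) hv

/-- If `G` is connected, `D` is a valid orientation with `γ_t(D) = |V(G)| - 1`,
and `s` has out-degree 0 and in-degree at least 2 in `D`, then the subgraph of
`G` induced on `V(G) ∖ {s}` is 2-regular, i.e. `G - s` is a disjoint union of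
cycles. -/
theorem stmt_14 {V : Type} [Fintype V] (G : SimpleGraph V) (hconn : G.Connected)
    (D : V → V → Prop) (hor : IsOrientation G D) (hvalid : IsValidOrientation D)
    (hγ : totalDomNum D = Fintype.card V - 1)
    (s : V) (hout : ∀ w : V, ¬ D s w) (hin : 2 ≤ {u : V | D u s}.ncard) :
    ∀ v : V, v ≠ s → (G.neighborSet v \ {s}).ncard = 2 :=
  stmt_14_general G D hor hvalid hγ s hout hin
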